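/- There exists an absolute constant C > 0 such that for all positive integers n, r, a with r ∣ n, a < r, g = n/r ≥ 2, and n − g·a − 3 > 0, there exists a prime power q ≤ C·n^3 for which a maximally recoverable (n, r, h=3, a, q)-local reconstruction code exists. -/

import Mathlib

/-- The parity check matrix of an `(n, r, h, a, q)`-local reconstruction code with `g = n/r`
local groups, given by local-parity matrices `A i` (in block-diagonal position) and
heavy-parity matrices `B i`. Rows are indexed by `(Fin g × Fin a) ⊕ Fin h`
(local parity rows first, then the `h` heavy rows) and columns by `Fin g × Fin r`
(the `i`-th local group consists of the columns with first coordinate `i`). -/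
def lrcParityCheck (F : Type) [Field F] (g r a h : ℕ)
    (A : Fin g → Matrix (Fin a) (Fin r) F)
    (B : Fin g → Matrix (Fin h) (Fin r) F) :
    Matrix ((Fin g × Fin a) ⊕ Fin h) (Fin g × Fin r) F :=
  fun ρ c =>
    Sum.elim (fun p : Fin g × Fin a => if p.1 = c.1 then A p.1 p.2 c.2 else 0)
      (fun j : Fin h => B c.1 j c.2) ρ

/-- `A, B` define a maximally recoverable LRC:  every `a × a` minor of each `A i` is
nonzero (stated: any `a` columns of `A i` are linearly independent), and for every set `E`
of `a * g + h` columns containing at least `a` columns from each local group, the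
corresponding columns of the parity check matrix are linearly independent (equivalently,
the square submatrix of the parity check matrix on the columns of `E` is invertible). -/
def IsMRLRC (F : Type) [Field F] (g r a h : ℕ)
    (A : Fin g → Matrix (Fin a) (Fin r) F)
    (B : Fin g → Matrix (Fin h) (Fin r) F) : Prop :=
  (∀ i : Fin g, ∀ S : Finset (Fin r), S.card = a →
      LinearIndependent F (fun c : {x // x ∈ S} => fun j : Fin a => A i j c.1)) ∧
  (∀ E : Finset (Fin g × Fin r), E.card = a * g + h →
      (∀ i : Fin g, a ≤ (E.filter (fun x => x.1 = i)).card) →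
      LinearIndependent F
        (fun c : {x // x ∈ E} => fun ρ => lrcParityCheck F g r a h A B ρ c.1))

/-- There is a maximally recoverable `(n = g * r, r, h, a, q)`-local reconstruction code
with `g` local groups each of size `r`, over the field with `q` elements. -/
def ExistsMRLRC (g r h a q : ℕ) : Prop :=
  ∃ (F : Type) (_ : Field F) (_ : Fintype F),
    Fintype.card F = q ∧
      ∃ (A : Fin g → Matrix (Fin a) (Fin r) F) (B : Fin g → Matrix (Fin h) (Fin r) F),
        IsMRLRC F g r a h A B

/-! The code is a linearized Reed–Solomon code over a cyclic extension `F / K` of degree `h` with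
generator `σ`. A row vector killed by the chosen columns consists of local coefficients `l i` and
heavy coefficients `c`; the latter define a skew polynomial `f` of degree less than `h`, evaluated
in group `i` as a `K`-linear operator `f (T i)`, where `T i` is `y ↦ γ i * σ y`. The evaluation
points lie in `K`, so the columns of a group are `K`-independent in `K ^ a × F`, and a group with
`m i` chosen columns has `m i ≤ a + dim ker f (T i)`. When the `γ i` are nonzero and pairwise
non-conjugate, a nonzero `f` satisfies `∑ i, dim ker f (T i) < h`, the skew analogue of counting the
roots of a polynomial; this contradicts `∑ i, m i = a * g + h`, so `c = 0`. Elements with distinct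
norms are non-conjugate, hence a prime `n < p ≤ 2 * n` leaves enough room in `K = ZMod p`. -/

open Module
open scoped Matrix

section Rank

variable {K U V M : Type*} [Field K] [AddCommGroup U] [Module K U] [AddCommGroup V] [Module K V]
  [AddCommGroup M] [Module K M]

theorem exists_mem_ne_zero_of_finrank_ne_zero {W : Submodule K V} (hW : finrank K W ≠ 0) :
    ∃ x ∈ W, x ≠ 0 :=
  Submodule.exists_mem_ne_zero_of_ne_bot fun h => hW (by rw [h, finrank_bot])

theorem finrank_map_add_finrank_inf_ker [FiniteDimensional K V] (f : V →ₗ[K] U)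
    (W : Submodule K V) :
    finrank K (W.map f) + finrank K ↥(W ⊓ LinearMap.ker f) = finrank K W := by
  rw [← LinearMap.range_domRestrict, ← Submodule.map_comap_subtype,
    Submodule.finrank_map_subtype_eq, ← LinearMap.ker_domRestrict,
    LinearMap.finrank_range_add_finrank_ker]

theorem finrank_ker_comp_le [FiniteDimensional K U] [FiniteDimensional K V] (f : U →ₗ[K] M)
    (g : V →ₗ[K] U) :
    finrank K (LinearMap.ker (f ∘ₗ g)) ≤
      finrank K (LinearMap.ker f) + finrank K (LinearMap.ker g) := by
  rw [← finrank_map_add_finrank_inf_ker g, LinearMap.ker_comp]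
  exact add_le_add (Submodule.finrank_mono (Submodule.map_comap_le g _))
    (Submodule.finrank_mono inf_le_right)

theorem finrank_ker_coprod_le [FiniteDimensional K U] [FiniteDimensional K V] (f : U →ₗ[K] M)
    (g : V →ₗ[K] M) :
    finrank K (LinearMap.ker (f.coprod g)) ≤ finrank K U + finrank K (LinearMap.ker g) := by
  have hker : LinearMap.ker (f.coprod g) ⊓ LinearMap.ker (LinearMap.fst K U V) ≤
      (LinearMap.ker g).map (LinearMap.inr K U V) := by
    rintro ⟨u, v⟩ ⟨huv, hu⟩
    obtain rfl : u = 0 := hu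
    exact ⟨v, by simpa using huv, rfl⟩
  rw [← finrank_map_add_finrank_inf_ker (LinearMap.fst K U V)]
  exact add_le_add (Submodule.finrank_le _)
    ((Submodule.finrank_mono hker).trans (Submodule.finrank_map_le _ _))

theorem card_le_add_finrank_ker [FiniteDimensional K U] [FiniteDimensional K V]
    {ι : Type*} [Fintype ι] {u : ι → U} {v : ι → V}
    (huv : LinearIndependent K fun s => (u s, v s)) {f : U →ₗ[K] M} {g : V →ₗ[K] M}
    (h : ∀ s, f (u s) + g (v s) = 0) :
    Fintype.card ι ≤ finrank K U + finrank K (LinearMap.ker g) := by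
  have hspan : Submodule.span K (Set.range fun s => (u s, v s)) ≤ LinearMap.ker (f.coprod g) :=
    Submodule.span_le.2 <| Set.range_subset_iff.2 fun s => by simpa using h s
  calc Fintype.card ι = finrank K (Submodule.span K (Set.range fun s => (u s, v s))) :=
        (finrank_span_eq_card huv).symm
    _ ≤ finrank K (LinearMap.ker (f.coprod g)) := Submodule.finrank_mono hspan
    _ ≤ _ := finrank_ker_coprod_le f g

theorem linearIndependent_pow_of_injective {ι : Type*} [Fintype ι] {x : ι → K}
    (hx : Function.Injective x) {m : ℕ} (hm : Fintype.card ι ≤ m) :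
    LinearIndependent K fun s (j : Fin m) => x s ^ (j : ℕ) := by
  rw [Fintype.linearIndependent_iff]
  intro w hw s
  let e := Fintype.equivFin ι
  have hzero : w ∘ e.symm = 0 := by
    refine Matrix.eq_zero_of_forall_pow_sum_mul_pow_eq_zero (hx.comp e.symm.injective) fun j => ?_
    have hj := congrFun hw (j.castLE hm)
    simpa [e.symm.sum_comp fun s => w s * x s ^ (j : ℕ)] using hj
  simpa using congrFun hzero (e s)

theorem linearIndependent_of_dotProduct_eq_zero {ι κ : Type*} [Fintype ι] [Fintype κ]
    {v : ι → κ → K} (hcard : Fintype.card ι = Fintype.card κ)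
    (h : ∀ u : κ → K, (∀ i, u ⬝ᵥ v i = 0) → u = 0) : LinearIndependent K v := by
  classical
  refine linearIndependent_of_top_le_span_of_card_eq_finrank ?_ (by simpa using hcard)
  by_contra hspan
  obtain ⟨φ, hφ, hker⟩ := Submodule.exists_le_ker_of_lt_top _ (lt_top_iff_ne_top.2 (hspan ·.ge))
  obtain ⟨u, rfl⟩ := (dotProductEquiv K κ).surjective φ
  refine hφ ?_
  rw [h u fun i => hker (Submodule.subset_span ⟨i, rfl⟩), map_zero]

theorem eq_zero_of_dotProduct_eq_zero {ι κ : Type*} [Fintype ι] [Fintype κ] {v : ι → κ → K}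
    (hv : LinearIndependent K v) (hcard : Fintype.card ι = Fintype.card κ) {u : κ → K}
    (hu : ∀ i, u ⬝ᵥ v i = 0) : u = 0 := by
  classical
  have hspan := hv.span_eq_top_of_card_eq_finrank' (by simpa using hcard)
  refine (dotProductEquiv K κ).map_eq_zero_iff.1 (LinearMap.ext_on_range hspan fun i => ?_)
  simpa using hu i

end Rank

section SkewPolynomial

variable {K F : Type*} [Field K] [Field F] [Algebra K F]

/-- The `K`-linear operator `x ↦ γ * σ x`. -/
def twist (σ : F →ₐ[K] F) (γ : F) : End K F :=
  γ • σ.toLinearMap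

theorem twist_apply (σ : F →ₐ[K] F) (γ x : F) : twist σ γ x = γ * σ x := rfl

/-- The operator `∑ k, c k • T ^ k` with `T = twist σ γ`: the evaluation at `γ` of the skew
polynomial over `(F, σ)` with coefficients `c`. -/
def skewEval (σ : F →ₐ[K] F) (γ : F) {m : ℕ} (c : Fin m → F) : End K F :=
  ∑ k, c k • twist σ γ ^ (k : ℕ)

/-- `γ` and `δ` are `σ`-conjugate: `δ = γ * σ z / z` for some nonzero `z`. -/
def IsSkewConj (σ : F →ₐ[K] F) (γ δ : F) : Prop :=
  ∃ z : F, z ≠ 0 ∧ γ * σ z = δ * z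

theorem IsSkewConj.norm_eq [FiniteDimensional K F] {σ : F →ₐ[K] F} {γ δ : F}
    (h : IsSkewConj σ γ δ) : Algebra.norm K γ = Algebra.norm K δ := by
  obtain ⟨z, hz, h⟩ := h
  have hσ : Algebra.norm K (σ z) = Algebra.norm K z :=
    Algebra.norm_eq_of_algEquiv (AlgEquiv.ofBijective σ (Algebra.IsAlgebraic.algHom_bijective σ)) z
  refine mul_right_cancel₀ (Algebra.norm_ne_zero_iff.2 hz) ?_
  rw [← map_mul _ δ, ← h, map_mul, hσ]

theorem skewEval_cons (σ : F →ₐ[K] F) (γ : F) {m : ℕ} (ρ : F) (c : Fin m → F) :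
    skewEval σ γ (Fin.cons ρ c : Fin (m + 1) → F) = ρ • 1 + skewEval σ γ c * twist σ γ := by
  simp [skewEval, Fin.sum_univ_succ, Finset.sum_mul, pow_succ, smul_mul_assoc]

theorem twist_mul_sub_smul_one (σ : F →ₐ[K] F) (γ δ : F) :
    twist σ γ * (twist σ γ - δ • 1) = (twist σ γ - σ δ • 1) * twist σ γ := by
  ext x
  simp only [End.mul_apply, LinearMap.sub_apply, LinearMap.smul_apply, End.one_apply, twist_apply,
    smul_eq_mul, map_sub, map_mul]
  ring

-- Right division by `T - δ`, peeling off the constant coefficient: the quotient of the tail is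
-- taken at `σ δ` because `T * (T - δ) = (T - σ δ) * T`.
theorem exists_skewEval_eq_mul_add (σ : F →ₐ[K] F) {m : ℕ} (c : Fin (m + 1) → F) (δ : F) :
    ∃ (d : Fin m → F) (ρ : F), (d = 0 → ρ = 0 → c = 0) ∧
      ∀ γ, skewEval σ γ c = skewEval σ γ d * (twist σ γ - δ • 1) + ρ • 1 := by
  induction m generalizing δ with
  | zero =>
    refine ⟨0, c 0, fun _ h => funext fun k => by rwa [Fin.fin_one_eq_zero k], fun γ => ?_⟩
    simp [skewEval]
  | succ m ih =>
    obtain ⟨d, ρ, hzero, hdiv⟩ := ih (Fin.tail c) (σ δ)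
    refine ⟨Fin.cons ρ d, c 0 + ρ * δ, fun hd hρ => ?_, fun γ => ?_⟩
    · obtain rfl : ρ = 0 := congrFun hd 0
      have htail : Fin.tail c = 0 := hzero (funext fun k => congrFun hd k.succ) rfl
      funext k
      cases k using Fin.cases with
      | zero => simpa using hρ
      | succ k => exact congrFun htail k
    · calc skewEval σ γ c = c 0 • 1 + skewEval σ γ (Fin.tail c) * twist σ γ := by
            rw [← skewEval_cons, Fin.cons_self_tail]
        _ = c 0 • 1 +
            (skewEval σ γ d * ((twist σ γ - σ δ • 1) * twist σ γ) + ρ • twist σ γ) := by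
            rw [hdiv, add_mul, mul_assoc, smul_mul_assoc, one_mul]
        _ = (ρ • 1 + skewEval σ γ d * twist σ γ) * (twist σ γ - δ • 1) + (c 0 + ρ * δ) • 1 := by
            rw [← twist_mul_sub_smul_one, add_mul, mul_assoc, smul_mul_assoc, one_mul, smul_sub,
              smul_smul, add_smul]
            abel
        _ = _ := by rw [skewEval_cons]

variable {σ : F →ₐ[K] F}

theorem mem_ker_twist_sub_smul_one {γ δ x : F} :
    x ∈ LinearMap.ker (twist σ γ - δ • 1) ↔ γ * σ x = δ * x := by
  simp [twist_apply, sub_eq_zero]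

theorem IsSkewConj.of_eigenvector {γ γ' δ x y : F} (hx : x ≠ 0) (hy : y ≠ 0)
    (hγ : γ * σ x = δ * x) (hγ' : γ' * σ y = δ * y) : IsSkewConj σ γ γ' := by
  have hσy : σ y ≠ 0 := by simpa using hy
  refine ⟨x / y, div_ne_zero hx hy, ?_⟩
  rw [map_div₀]
  field_simp
  linear_combination y * hγ - x * hγ'

theorem finrank_ker_twist_sub_smul_one_le_one
    (hσ : ∀ x, σ x = x → x ∈ Set.range (algebraMap K F)) {γ : F} (hγ : γ ≠ 0) (δ : F) :
    finrank K (LinearMap.ker (twist σ γ - δ • 1)) ≤ 1 := by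
  by_cases hzero : finrank K (LinearMap.ker (twist σ γ - δ • 1)) = 0
  · exact hzero ▸ zero_le_one
  obtain ⟨x, hx, hx0⟩ := exists_mem_ne_zero_of_finrank_ne_zero hzero
  refine finrank_le_one ⟨x, hx⟩ fun ⟨y, hy⟩ => ?_
  rw [mem_ker_twist_sub_smul_one] at hx hy
  have hσx : σ x ≠ 0 := by simpa using hx0
  have hfixed : σ (y / x) = y / x := by
    rw [map_div₀, div_eq_div_iff hσx hx0]
    apply mul_left_cancel₀ hγ
    linear_combination x * hy - y * hx
  obtain ⟨k, hk⟩ := hσ _ hfixed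
  exact ⟨k, Subtype.ext <| by simp [Algebra.smul_def, hk, hx0]⟩

variable {ι : Type*} [Fintype ι] {γ : ι → F}

theorem sum_finrank_ker_twist_sub_smul_one_le_one
    (hσ : ∀ x, σ x = x → x ∈ Set.range (algebraMap K F)) (hγ : ∀ i, γ i ≠ 0)
    (hconj : Pairwise fun i j => ¬ IsSkewConj σ (γ i) (γ j)) (δ : F) :
    ∑ i, finrank K (LinearMap.ker (twist σ (γ i) - δ • 1)) ≤ 1 := by
  by_cases hzero : ∀ i, finrank K (LinearMap.ker (twist σ (γ i) - δ • 1)) = 0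
  · simp [hzero]
  obtain ⟨i, hi⟩ := not_forall.1 hzero
  obtain ⟨x, hx, hx0⟩ := exists_mem_ne_zero_of_finrank_ne_zero hi
  rw [Fintype.sum_eq_single i fun j hji => ?_]
  · exact finrank_ker_twist_sub_smul_one_le_one hσ (hγ i) δ
  · by_contra hj
    obtain ⟨y, hy, hy0⟩ := exists_mem_ne_zero_of_finrank_ne_zero hj
    exact hconj hji (.of_eigenvector hy0 hx0 (mem_ker_twist_sub_smul_one.1 hy)
      (mem_ker_twist_sub_smul_one.1 hx))

theorem sum_finrank_ker_skewEval_lt [FiniteDimensional K F]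
    (hσ : ∀ x, σ x = x → x ∈ Set.range (algebraMap K F)) (hγ : ∀ i, γ i ≠ 0)
    (hconj : Pairwise fun i j => ¬ IsSkewConj σ (γ i) (γ j)) {m : ℕ} {c : Fin m → F} (hc : c ≠ 0) :
    ∑ i, finrank K (LinearMap.ker (skewEval σ (γ i) c)) < m := by
  induction m with
  | zero => exact absurd (Subsingleton.elim c 0) hc
  | succ m ih =>
    by_cases hzero : ∀ i, finrank K (LinearMap.ker (skewEval σ (γ i) c)) = 0
    · simp [hzero]
    obtain ⟨i, hi⟩ := not_forall.1 hzero
    obtain ⟨x, hx, hx0⟩ := exists_mem_ne_zero_of_finrank_ne_zero hi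
    set δ := γ i * σ x / x with hδ
    have hroot : x ∈ LinearMap.ker (twist σ (γ i) - δ • 1) := by
      rw [mem_ker_twist_sub_smul_one, hδ, div_mul_cancel₀ _ hx0]
    obtain ⟨d, ρ, hdρ, hdiv⟩ := exists_skewEval_eq_mul_add σ c δ
    obtain rfl : ρ = 0 := by
      rw [hdiv, LinearMap.mem_ker, LinearMap.add_apply, End.mul_apply,
        LinearMap.mem_ker.1 hroot, map_zero, zero_add] at hx
      simpa [hx0] using hx
    have hd : d ≠ 0 := fun hd => hc (hdρ hd rfl)
    calc ∑ j, finrank K (LinearMap.ker (skewEval σ (γ j) c))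
        ≤ ∑ j, (finrank K (LinearMap.ker (skewEval σ (γ j) d)) +
            finrank K (LinearMap.ker (twist σ (γ j) - δ • 1))) :=
          Finset.sum_le_sum fun j _ => by
            rw [hdiv, zero_smul, add_zero]
            exact finrank_ker_comp_le _ _
      _ = ∑ j, finrank K (LinearMap.ker (skewEval σ (γ j) d)) +
            ∑ j, finrank K (LinearMap.ker (twist σ (γ j) - δ • 1)) := Finset.sum_add_distrib
      _ < m + 1 :=
          add_lt_add_of_lt_of_le (ih hd)
            (sum_finrank_ker_twist_sub_smul_one_le_one hσ hγ hconj δ)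

end SkewPolynomial

section Code

theorem le_add_of_sum_eq_mul_card_add {ι : Type*} [Fintype ι] {f : ι → ℕ} {a h : ℕ}
    (ha : ∀ i, a ≤ f i) (hf : ∑ i, f i = a * Fintype.card ι + h) (i : ι) : f i ≤ a + h := by
  classical
  have hrest : a * (Fintype.card ι - 1) ≤ ∑ j ∈ Finset.univ.erase i, f j := by
    simpa [Finset.card_erase_of_mem, mul_comm] using
      Finset.card_nsmul_le_sum (Finset.univ.erase i) f a fun j _ => ha j
  have hsplit := Finset.add_sum_erase Finset.univ f (Finset.mem_univ i)
  obtain ⟨m, hm⟩ := Nat.exists_eq_add_of_lt (Fintype.card_pos_iff.2 ⟨i⟩)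
  rw [hm] at hrest hf
  simp only [zero_add, Nat.add_sub_cancel, mul_add] at hrest hf
  lia

theorem dotProduct_lrcParityCheck {F : Type} [Field F] {g r a h : ℕ}
    (A : Fin g → Matrix (Fin a) (Fin r) F) (B : Fin g → Matrix (Fin h) (Fin r) F)
    (u : (Fin g × Fin a) ⊕ Fin h → F) (p : Fin g × Fin r) :
    (u ⬝ᵥ fun ρ => lrcParityCheck F g r a h A B ρ p) =
      (fun j => u (.inl (p.1, j))) ⬝ᵥ (A p.1)ᵀ p.2 + (fun k => u (.inr k)) ⬝ᵥ (B p.1)ᵀ p.2 := by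
  simp [dotProduct, lrcParityCheck, Fintype.sum_prod_type]

theorem card_filter_fst_eq {ι κ : Type*} [DecidableEq ι] [Fintype κ] [DecidableEq κ]
    (E : Finset (ι × κ)) (i : ι) :
    (E.filter (·.1 = i)).card = (Finset.univ.filter fun s => (i, s) ∈ E).card := by
  rw [← Finset.card_image_of_injective (Finset.univ.filter _) (Prod.mk_right_injective i)]
  refine congrArg Finset.card (Finset.ext fun p => ?_)
  grind

theorem isMRLRC_of_heavy_eq_zero {F : Type} [Field F] {g r a h : ℕ}
    {A : Fin g → Matrix (Fin a) (Fin r) F} {B : Fin g → Matrix (Fin h) (Fin r) F}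
    (hA : ∀ i, ∀ S : Finset (Fin r), S.card = a → LinearIndependent F fun s : S => (A i)ᵀ s)
    (hB : ∀ S : Fin g → Finset (Fin r), ∑ i, (S i).card = a * g + h → (∀ i, a ≤ (S i).card) →
      ∀ (l : Fin g → Fin a → F) (c : Fin h → F),
        (∀ i, ∀ s ∈ S i, l i ⬝ᵥ (A i)ᵀ s + c ⬝ᵥ (B i)ᵀ s = 0) → c = 0) :
    IsMRLRC F g r a h A B := by
  refine ⟨hA, fun E hE hEa => linearIndependent_of_dotProduct_eq_zero ?_ fun u hu => ?_⟩
  · simp [hE, mul_comm]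
  let S (i : Fin g) : Finset (Fin r) := Finset.univ.filter fun s => (i, s) ∈ E
  have hS (i : Fin g) : (E.filter (·.1 = i)).card = (S i).card := card_filter_fst_eq E i
  have hsum : ∑ i, (S i).card = a * g + h := by
    rw [← hE, Finset.card_eq_sum_card_fiberwise (f := Prod.fst) (t := Finset.univ)
      fun _ _ => by simp]
    exact Finset.sum_congr rfl fun i _ => (hS i).symm
  have ha (i : Fin g) : a ≤ (S i).card := hS i ▸ hEa i
  have hcol : ∀ i, ∀ s ∈ S i, (fun j => u (.inl (i, j))) ⬝ᵥ (A i)ᵀ s +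
      (fun k => u (.inr k)) ⬝ᵥ (B i)ᵀ s = 0 := fun i s hs => by
    rw [← dotProduct_lrcParityCheck A B u (i, s), hu ⟨(i, s), (Finset.mem_filter.1 hs).2⟩]
  have hheavy : (fun k => u (.inr k)) = 0 := hB S hsum ha _ _ hcol
  have hlocal (i : Fin g) : (fun j => u (.inl (i, j))) = 0 := by
    obtain ⟨T, hT, hTa⟩ := Finset.exists_subset_card_eq (ha i)
    refine eq_zero_of_dotProduct_eq_zero (hA i T hTa) (by simp [hTa]) fun s => ?_
    simpa [hheavy] using hcol i s (hT s.2)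
  ext (⟨i, j⟩ | k)
  exacts [congrFun (hlocal i) j, congrFun hheavy k]

section LinearizedReedSolomon

variable {K F : Type*} [Field K] [Field F] [Algebra K F]

/-- The moments `x ^ a, …, x ^ (a + h - 1)` packed into one element of `F` through the `K`-basis
`β`, so that they continue the local parities `1, x, …, x ^ (a - 1)` to a Vandermonde column. -/
noncomputable def heavySymbol {h : ℕ} (β : Basis (Fin h) K F) (a : ℕ) (x : K) : F :=
  ∑ k : Fin h, x ^ (a + k : ℕ) • β k

theorem linearIndependent_pow_heavySymbol {ι : Type*} [Fintype ι] {x : ι → K}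
    (hx : Function.Injective x) {a h : ℕ} (hcard : Fintype.card ι ≤ a + h)
    (β : Basis (Fin h) K F) :
    LinearIndependent K fun s => ((fun j : Fin a => x s ^ (j : ℕ)), heavySymbol β a (x s)) := by
  let e : (Fin (a + h) → K) ≃ₗ[K] (Fin a → K) × F :=
    LinearEquiv.funCongrLeft K K finSumFinEquiv ≪≫ₗ
      LinearEquiv.sumArrowLequivProdArrow _ _ K K ≪≫ₗ .prodCongr (.refl K _) β.equivFun.symm
  have he := (linearIndependent_pow_of_injective hx hcard).map' e.toLinearMap e.ker
  have hcomp : (fun s => ((fun j : Fin a => x s ^ (j : ℕ)), heavySymbol β a (x s))) =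
      e ∘ fun s (j : Fin (a + h)) => x s ^ (j : ℕ) := by
    funext s
    ext <;> simp [e, heavySymbol, Basis.equivFun_symm_apply]
  rwa [hcomp]

theorem card_le_add_finrank_ker_of_dotProduct_add_eq_zero {ι : Type*} [Fintype ι] {x : ι → K}
    (hx : Function.Injective x) {a h : ℕ} (hcard : Fintype.card ι ≤ a + h)
    (β : Basis (Fin h) K F) {l : Fin a → F} {L : End K F}
    (hL : ∀ s, (l ⬝ᵥ fun j => algebraMap K F (x s) ^ (j : ℕ)) + L (heavySymbol β a (x s)) = 0) :
    Fintype.card ι ≤ a + finrank K (LinearMap.ker L) := by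
  have := Module.Finite.of_basis β
  have hcol (s : ι) : Fintype.linearCombination K l (fun j : Fin a => x s ^ (j : ℕ)) +
      L (heavySymbol β a (x s)) = 0 := by
    simpa [Fintype.linearCombination_apply, dotProduct, Algebra.smul_def, mul_comm] using hL s
  simpa using card_le_add_finrank_ker (linearIndependent_pow_heavySymbol hx hcard β) hcol

/-- The Vandermonde matrix of local parities, with evaluation points `x s` taken in the subfield
`K`; the same matrix serves every local group. -/
def localParity (F : Type*) [Field F] [Algebra K F] {r : ℕ} (x : Fin r → K) (a : ℕ) :
    Matrix (Fin a) (Fin r) F :=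
  .of fun j s => algebraMap K F (x s) ^ (j : ℕ)

/-- The heavy parities of a local group: row `k` is `(γ * σ ·)^k` applied to the heavy symbols, as
in a linearized Reed–Solomon code. The parameter `γ` tells the groups apart. -/
noncomputable def heavyParity (σ : F →ₐ[K] F) (γ : F) {r h : ℕ} (β : Basis (Fin h) K F)
    (x : Fin r → K) (a : ℕ) : Matrix (Fin h) (Fin r) F :=
  .of fun k s => (twist σ γ ^ (k : ℕ)) (heavySymbol β a (x s))

theorem linearIndependent_localParity {r a : ℕ} {x : Fin r → K} (hx : Function.Injective x)
    {S : Finset (Fin r)} (hS : S.card ≤ a) :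
    LinearIndependent F fun s : S => (localParity F x a)ᵀ s :=
  linearIndependent_pow_of_injective (((algebraMap K F).injective.comp hx).comp
    Subtype.val_injective) (by simpa using hS)

theorem dotProduct_heavyParity (σ : F →ₐ[K] F) (γ : F) {r h : ℕ} (β : Basis (Fin h) K F)
    (x : Fin r → K) (a : ℕ) (c : Fin h → F) (s : Fin r) :
    c ⬝ᵥ (heavyParity σ γ β x a)ᵀ s = skewEval σ γ c (heavySymbol β a (x s)) := by
  simp [dotProduct, heavyParity, skewEval]

theorem isMRLRC_localParity_heavyParity {F : Type} [Field F] [Algebra K F] {σ : F →ₐ[K] F}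
    (hσ : ∀ y, σ y = y → y ∈ Set.range (algebraMap K F)) {g r h : ℕ} {γ : Fin g → F}
    (hγ : ∀ i, γ i ≠ 0) (hconj : Pairwise fun i j => ¬ IsSkewConj σ (γ i) (γ j))
    {x : Fin r → K} (hx : Function.Injective x) (β : Basis (Fin h) K F) (a : ℕ) :
    IsMRLRC F g r a h (fun _ => localParity F x a) (fun i => heavyParity σ (γ i) β x a) := by
  have := Module.Finite.of_basis β
  refine isMRLRC_of_heavy_eq_zero (fun _ S hS => linearIndependent_localParity hx hS.le)
    fun S hsum ha l c hcol => ?_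
  by_contra hc
  have hle (i : Fin g) : (S i).card ≤ a + h :=
    le_add_of_sum_eq_mul_card_add ha (by simpa using hsum) i
  have hker (i : Fin g) :
      (S i).card ≤ a + finrank K (LinearMap.ker (skewEval σ (γ i) c)) := by
    have hcolF (s : S i) : (l i ⬝ᵥ fun j => algebraMap K F (x s) ^ (j : ℕ)) +
        skewEval σ (γ i) c (heavySymbol β a (x s)) = 0 := by
      rw [← dotProduct_heavyParity]
      exact hcol i s s.2
    rw [← Fintype.card_coe]
    exact card_le_add_finrank_ker_of_dotProduct_add_eq_zero (hx.comp Subtype.val_injective)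
      (by simpa using hle i) β hcolF
  have hlt : a * g + h < a * g + h :=
    calc a * g + h = ∑ i, (S i).card := hsum.symm
      _ ≤ ∑ i, (a + finrank K (LinearMap.ker (skewEval σ (γ i) c))) :=
        Finset.sum_le_sum fun i _ => hker i
      _ = a * g + ∑ i, finrank K (LinearMap.ker (skewEval σ (γ i) c)) := by
        simp [Finset.sum_add_distrib, mul_comm]
      _ < a * g + h := Nat.add_lt_add_left (sum_finrank_ker_skewEval_lt hσ hγ hconj hc) _
  exact hlt.false

end LinearizedReedSolomon

end Code

section FiniteField

variable {K : Type*} [Field K]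

theorem exists_pairwise_not_isSkewConj [Fintype K] {F : Type*} [Field F] [Finite F] [Algebra K F]
    (σ : F →ₐ[K] F) {ι : Type*} [Fintype ι] (hι : Fintype.card ι < Fintype.card K) :
    ∃ γ : ι → F, (∀ i, γ i ≠ 0) ∧ Pairwise fun i j => ¬ IsSkewConj σ (γ i) (γ j) := by
  classical
  have hunits : Fintype.card ι ≤ Fintype.card Kˣ := by
    rw [Fintype.card_units]
    exact Nat.le_sub_one_of_lt hι
  obtain ⟨u⟩ := Function.Embedding.nonempty_of_card_le hunits
  choose γ hγ using fun i => FiniteField.norm_surjective K F (u i : K)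
  refine ⟨γ, fun i h0 => (u i).ne_zero ?_, fun i j hij hconj => hij (u.injective ?_)⟩
  · rw [← hγ, h0, Algebra.norm_zero]
  · rw [Units.ext_iff, ← hγ, ← hγ, hconj.norm_eq]

theorem mem_range_algebraMap_of_frob_eq_self [Finite K] {p n : ℕ} [Fact p.Prime] [CharP K p]
    [NeZero n] {x : FiniteField.Extension K p n} (hx : FiniteField.Extension.frob K p n x = x) :
    x ∈ Set.range (algebraMap K (FiniteField.Extension K p n)) := by
  refine (IsGalois.mem_range_algebraMap_iff_fixed x).2 fun τ => ?_
  obtain ⟨i, -, rfl⟩ := FiniteField.Extension.exists_frob_pow_eq K p n τ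
  rw [AlgEquiv.coe_pow]
  exact Function.iterate_fixed hx i

theorem existsMRLRC_card_pow (K : Type) [Field K] [Fintype K] {g r h : ℕ}
    (hg : g < Fintype.card K) (hr : r ≤ Fintype.card K) (hh : h ≠ 0) (a : ℕ) :
    ExistsMRLRC g r h a (Fintype.card K ^ h) := by
  obtain ⟨p, _⟩ := CharP.exists K
  have : Fact p.Prime := ⟨CharP.char_is_prime K p⟩
  have : NeZero h := ⟨hh⟩
  let F := FiniteField.Extension K p h
  let σ : F →ₐ[K] F := FiniteField.Extension.frob K p h
  let _ : Fintype F := Fintype.ofFinite F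
  obtain ⟨γ, hγ, hconj⟩ := exists_pairwise_not_isSkewConj σ (ι := Fin g) (by simpa using hg)
  obtain ⟨x⟩ : Nonempty (Fin r ↪ K) := Function.Embedding.nonempty_of_card_le (by simpa using hr)
  refine ⟨F, inferInstance, inferInstance, ?_, _, _, isMRLRC_localParity_heavyParity
    (fun y => mem_range_algebraMap_of_frob_eq_self) hγ hconj x.injective
    (finBasisOfFinrankEq K F (FiniteField.finrank_extension K p h)) a⟩
  rw [← Nat.card_eq_fintype_card, FiniteField.natCard_extension, Nat.card_eq_fintype_card]

end FiniteField

theorem exists_mrlrc_h3_cubic_field_size_general {n r h : ℕ} (hn : n ≠ 0) (hrn : r ∣ n)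
    (hh : h ≠ 0) (a : ℕ) :
    ∃ q : ℕ, IsPrimePow q ∧ q ≤ (2 * n) ^ h ∧ ExistsMRLRC (n / r) r h a q := by
  obtain ⟨p, hp, hnp, hp2⟩ := Nat.exists_prime_lt_and_le_two_mul n hn
  have : Fact p.Prime := ⟨hp⟩
  refine ⟨p ^ h, hp.isPrimePow.pow hh, Nat.pow_le_pow_left hp2 h, ?_⟩
  have hg : n / r < Fintype.card (ZMod p) := by
    rw [ZMod.card]
    exact (Nat.div_le_self n r).trans_lt hnp
  have hr : r ≤ Fintype.card (ZMod p) := by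
    rw [ZMod.card]
    exact (Nat.le_of_dvd (Nat.pos_of_ne_zero hn) hrn).trans hnp.le
  simpa using existsMRLRC_card_pow (ZMod p) hg hr hh a

/-- **Theorem 5.5.** There is an absolute constant `C > 0` such that for all positive
integers `n, r, a` with `r ∣ n`, `a < r`, `g = n/r ≥ 2` and `n - g·a - 3 > 0`, there is a
prime power `q ≤ C·n³` for which a maximally recoverable `(n, r, h = 3, a, q)`-local
reconstruction code exists. -/
theorem exists_mrlrc_h3_cubic_field_size :
    ∃ C : ℝ, 0 < C ∧
      ∀ n r a : ℕ, 0 < r → r ∣ n → a < r → 2 ≤ n / r → (n / r) * a + 3 < n →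
        ∃ q : ℕ, IsPrimePow q ∧ (q : ℝ) ≤ C * (n : ℝ) ^ 3 ∧
          ExistsMRLRC (n / r) r 3 a q := by
  refine ⟨2 ^ 3, by norm_num, fun n r a _ hrn _ _ hn => ?_⟩
  obtain ⟨q, hq, hle, hex⟩ :=
    exists_mrlrc_h3_cubic_field_size_general (Nat.ne_zero_of_lt hn) hrn three_ne_zero a
  exact ⟨q, hq, by rw [← mul_pow]; exact_mod_cast hle, hex⟩
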